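/- The ℂ-algebra homomorphism φ : ℂ[X,Y,Z,U,E,W,V,A,C,D,B] → ℂ[x,y,z,u,v,w] determined by φ(X) = x, φ(Y) = y, φ(Z) = z, φ(U) = xy/2 + u, φ(E) = xy/2 − u, φ(V) = yz/2 + v, φ(W) = yz/2 − v, φ(A) = w + xv/2 + zu/2 + xyz/6, φ(C) = w − xv/2 − zu/2 + xyz/6, φ(D) = xyz/3 + xv/2 − zu/2 − w, φ(B) = xy²z/12 + uv − yw is surjective, and its kernel is the ideal generated by the ten elements U − XY + E, D − XV + A, B − UV + YA, XB − UD + AE, B − YD + EV, C − XW + UZ − A, VC − DW + BZ, W − YZ + V, C − EZ + D, YC − EW + B. Consequently the quotient of ℂ[X,Y,Z,U,E,W,V,A,C,D,B] by this ideal is isomorphic as a ℂ-algebra to the polynomial ring ℂ[x,y,z,u,v,w] in six variables. -/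

import Mathlib

open MvPolynomial

/-- The homomorphism `φ : ℂ[X,Y,Z,U,E,W,V,A,C,D,B] → ℂ[x,y,z,u,v,w]`.
Source variables `X, Y, Z, U, E, W, V, A, C, D, B` are the indices
`0, …, 10` of `Fin 11`; target variables `x, y, z, u, v, w` are the indices
`0, …, 5` of `Fin 6`.  The values are
`φ(X) = x`, `φ(Y) = y`, `φ(Z) = z`, `φ(U) = xy/2 + u`, `φ(E) = xy/2 − u`,
`φ(W) = yz/2 − v`, `φ(V) = yz/2 + v`, `φ(A) = w + xv/2 + zu/2 + xyz/6`,
`φ(C) = w − xv/2 − zu/2 + xyz/6`, `φ(D) = xyz/3 + xv/2 − zu/2 − w`,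
`φ(B) = xy²z/12 + uv − yw`. -/
noncomputable def phiSl4 : MvPolynomial (Fin 11) ℂ →ₐ[ℂ] MvPolynomial (Fin 6) ℂ :=
  MvPolynomial.aeval
    ![X 0, X 1, X 2,
      C (2⁻¹ : ℂ) * (X 0 * X 1) + X 3,
      C (2⁻¹ : ℂ) * (X 0 * X 1) - X 3,
      C (2⁻¹ : ℂ) * (X 1 * X 2) - X 4,
      C (2⁻¹ : ℂ) * (X 1 * X 2) + X 4,
      X 5 + C (2⁻¹ : ℂ) * (X 0 * X 4) + C (2⁻¹ : ℂ) * (X 2 * X 3) +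
        C (6⁻¹ : ℂ) * (X 0 * X 1 * X 2),
      X 5 - C (2⁻¹ : ℂ) * (X 0 * X 4) - C (2⁻¹ : ℂ) * (X 2 * X 3) +
        C (6⁻¹ : ℂ) * (X 0 * X 1 * X 2),
      C (3⁻¹ : ℂ) * (X 0 * X 1 * X 2) + C (2⁻¹ : ℂ) * (X 0 * X 4) -
        C (2⁻¹ : ℂ) * (X 2 * X 3) - X 5,
      C (12⁻¹ : ℂ) * (X 0 * X 1 ^ 2 * X 2) + X 3 * X 4 - X 1 * X 5]

/-- The ideal of the ten reduced Plücker relations of `sl(4)`: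
`U−XY+E`, `D−XV+A`, `B−UV+YA`, `XB−UD+AE`, `B−YD+EV`, `C−XW+UZ−A`,
`VC−DW+BZ`, `W−YZ+V`, `C−EZ+D`, `YC−EW+B`  (variables
`X,Y,Z,U,E,W,V,A,C,D,B` = indices `0,…,10`). -/
noncomputable def sl4RelationsIdeal : Ideal (MvPolynomial (Fin 11) ℂ) :=
  Ideal.span
    {X 3 - X 0 * X 1 + X 4,
     X 9 - X 0 * X 6 + X 7,
     X 10 - X 3 * X 6 + X 1 * X 7,
     X 0 * X 10 - X 3 * X 9 + X 7 * X 4,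
     X 10 - X 1 * X 9 + X 4 * X 6,
     X 8 - X 0 * X 5 + X 3 * X 2 - X 7,
     X 6 * X 8 - X 9 * X 5 + X 10 * X 2,
     X 5 - X 1 * X 2 + X 6,
     X 8 - X 4 * X 2 + X 9,
     X 1 * X 8 - X 4 * X 5 + X 10}

/-!
Let `N` be the generic strictly lower triangular `4 × 4` matrix with entries `x, y, z, u, v, w`.
The formulas for `φ` are the nontrivial flag minors of `exp N`.  Passing from the entries of
`1 + N` to those of `exp N` is a triangular, hence invertible, change of variables, so it suffices
to treat the minors of a unit lower triangular matrix with indeterminate entries; this works over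
every commutative ring.  There `X, Y, Z, U, V, A` are the entries themselves, and five of the
relations express `E, W, D, B, C` through them: modulo the relations every generator is a
polynomial in the entries.
-/

theorem ker_eq_of_mk_comp_comp {R A B : Type*} [CommSemiring R] [CommRing A] [Semiring B]
    [Algebra R A] [Algebra R B] {I : Ideal A} {f : A →ₐ[R] B} {g : B →ₐ[R] A}
    (hI : I ≤ RingHom.ker f)
    (hgf : (Ideal.Quotient.mkₐ R I).comp (g.comp f) = Ideal.Quotient.mkₐ R I) :
    RingHom.ker f = I := by
  refine le_antisymm (fun a ha => ?_) hI
  rw [RingHom.mem_ker] at ha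
  rw [← Ideal.Quotient.eq_zero_iff_mem, ← Ideal.Quotient.mkₐ_eq_mk R, ← hgf]
  simp only [AlgHom.comp_apply, ha, map_zero]

/-- The minor `δ^(k)_I` of a matrix: rows `I` against the first `k` columns.  Rows are numbered
from `0`, so that `δ^(2)_{13}` has `rows = ![0, 2]`. -/
def flagMinor {S m : Type*} [CommRing S] {n k : ℕ} (hk : k ≤ n) (M : Matrix m (Fin n) S)
    (rows : Fin k → m) : S :=
  (M.submatrix rows (Fin.castLE hk)).det

section Minors

variable (R : Type*) [CommRing R]

/-- The generic unit lower triangular `4 × 4` matrix.  The variables `0, 1, 2` are its first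
subdiagonal, `3, 4` its second and `5` its corner. -/
noncomputable def genericUnipotent : Matrix (Fin 4) (Fin 4) (MvPolynomial (Fin 6) R) :=
  !![1, 0, 0, 0;
     X 0, 1, 0, 0;
     X 3, X 1, 1, 0;
     X 5, X 4, X 2, 1]

/-- The nontrivial flag minors of the generic unipotent matrix, in the order
`X, Y, Z, U, E, W, V, A, C, D, B` of the generators. -/
noncomputable def unipotentMinor : Fin 11 → MvPolynomial (Fin 6) R :=
  let δ₁ := flagMinor (k := 1) (by decide) (genericUnipotent R)
  let δ₂ := flagMinor (k := 2) (by decide) (genericUnipotent R)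
  let δ₃ := flagMinor (k := 3) (by decide) (genericUnipotent R)
  ![δ₁ ![1], δ₂ ![0, 2], δ₃ ![0, 1, 3], δ₁ ![2], δ₂ ![1, 2], δ₃ ![0, 2, 3],
    δ₂ ![0, 3], δ₁ ![3], δ₃ ![1, 2, 3], δ₂ ![1, 3], δ₂ ![2, 3]]

theorem unipotentMinor_eq :
    unipotentMinor R =
      ![X 0, X 1, X 2, X 3,
        X 0 * X 1 - X 3,
        X 1 * X 2 - X 4,
        X 4, X 5,
        (X 0 * X 1 - X 3) * X 2 - (X 0 * X 4 - X 5),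
        X 0 * X 4 - X 5,
        X 3 * X 4 - X 1 * X 5] := by
  funext i
  fin_cases i <;>
    simp only [unipotentMinor, flagMinor, Matrix.det_fin_one, Matrix.det_fin_two,
      Matrix.det_fin_three, Matrix.submatrix_apply] <;>
    simp [genericUnipotent]
  ring

/-- The homomorphism evaluating the eleven generators at the minors of the generic unipotent
matrix. -/
noncomputable def minorHom : MvPolynomial (Fin 11) R →ₐ[R] MvPolynomial (Fin 6) R :=
  aeval (unipotentMinor R)

/-- The reduced Plücker relations over an arbitrary base ring; `sl4RelationsIdeal` is the case
`R = ℂ`. -/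
noncomputable def reducedPluckerIdeal : Ideal (MvPolynomial (Fin 11) R) :=
  Ideal.span
    {X 3 - X 0 * X 1 + X 4,
     X 9 - X 0 * X 6 + X 7,
     X 10 - X 3 * X 6 + X 1 * X 7,
     X 0 * X 10 - X 3 * X 9 + X 7 * X 4,
     X 10 - X 1 * X 9 + X 4 * X 6,
     X 8 - X 0 * X 5 + X 3 * X 2 - X 7,
     X 6 * X 8 - X 9 * X 5 + X 10 * X 2,
     X 5 - X 1 * X 2 + X 6,
     X 8 - X 4 * X 2 + X 9,
     X 1 * X 8 - X 4 * X 5 + X 10}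

theorem reducedPluckerIdeal_le_ker_minorHom :
    reducedPluckerIdeal R ≤ RingHom.ker (minorHom R) := by
  rw [reducedPluckerIdeal, Ideal.span_le]
  rintro p (rfl | rfl | rfl | rfl | rfl | rfl | rfl | rfl | rfl | rfl) <;>
    simp only [SetLike.mem_coe, RingHom.mem_ker, minorHom, map_add, map_sub, map_mul, aeval_X,
      unipotentMinor_eq, Matrix.cons_val] <;>
    ring

/-- The generators `X, Y, Z, U, V, A` whose minors are the six indeterminate entries of the generic
unipotent matrix. -/
def entryGenerator : Fin 6 → Fin 11 := ![0, 1, 2, 3, 6, 7]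

theorem minorHom_rename_entryGenerator (p : MvPolynomial (Fin 6) R) :
    minorHom R (rename entryGenerator p) = p := by
  suffices h : (minorHom R).comp (rename entryGenerator) = AlgHom.id R _ from
    DFunLike.congr_fun h p
  ext1 i
  fin_cases i <;> simp [minorHom, unipotentMinor_eq, entryGenerator]

theorem minorHom_surjective : Function.Surjective (minorHom R) := fun p =>
  ⟨rename entryGenerator p, minorHom_rename_entryGenerator R p⟩

theorem X_sub_rename_unipotentMinor_mem (i : Fin 11) :
    X i - rename entryGenerator (unipotentMinor R i) ∈ reducedPluckerIdeal R := by
  have hE : X 4 - (X 0 * X 1 - X 3) ∈ reducedPluckerIdeal R := by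
    have : X 3 - X 0 * X 1 + X 4 ∈ reducedPluckerIdeal R := Ideal.subset_span (by simp)
    convert this using 1; ring
  have hW : X 5 - (X 1 * X 2 - X 6) ∈ reducedPluckerIdeal R := by
    have : X 5 - X 1 * X 2 + X 6 ∈ reducedPluckerIdeal R := Ideal.subset_span (by simp)
    convert this using 1; ring
  have hD : X 9 - (X 0 * X 6 - X 7) ∈ reducedPluckerIdeal R := by
    have : X 9 - X 0 * X 6 + X 7 ∈ reducedPluckerIdeal R := Ideal.subset_span (by simp)
    convert this using 1; ring
  have hB : X 10 - (X 3 * X 6 - X 1 * X 7) ∈ reducedPluckerIdeal R := by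
    have : X 10 - X 3 * X 6 + X 1 * X 7 ∈ reducedPluckerIdeal R := Ideal.subset_span (by simp)
    convert this using 1; ring
  have hC : X 8 - ((X 0 * X 1 - X 3) * X 2 - (X 0 * X 6 - X 7)) ∈ reducedPluckerIdeal R := by
    have : X 8 - X 4 * X 2 + X 9 ∈ reducedPluckerIdeal R := Ideal.subset_span (by simp)
    convert sub_mem (add_mem this (Ideal.mul_mem_left _ (X 2) hE)) hD using 1; ring
  fin_cases i <;> simp [unipotentMinor_eq, entryGenerator, *]

theorem ker_minorHom : RingHom.ker (minorHom R) = reducedPluckerIdeal R := by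
  refine ker_eq_of_mk_comp_comp (g := rename entryGenerator)
    (reducedPluckerIdeal_le_ker_minorHom R) ?_
  ext1 i
  have h : Ideal.Quotient.mk (reducedPluckerIdeal R) (X i) =
      Ideal.Quotient.mk _ (rename entryGenerator (unipotentMinor R i)) :=
    Ideal.Quotient.mk_eq_mk_iff_sub_mem _ _ |>.2 (X_sub_rename_unipotentMinor_mem R i)
  simpa [minorHom] using h.symm

theorem sl4_reduced_shape_algebra_presentation_general
    {f : MvPolynomial (Fin 6) R →ₐ[R] MvPolynomial (Fin 6) R} (hf : Function.Bijective f) :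
    Function.Surjective (f.comp (minorHom R)) ∧
    RingHom.ker (f.comp (minorHom R)).toRingHom = reducedPluckerIdeal R ∧
    Nonempty ((MvPolynomial (Fin 11) R ⧸ reducedPluckerIdeal R) ≃ₐ[R]
      MvPolynomial (Fin 6) R) := by
  refine ⟨hf.surjective.comp (minorHom_surjective R), ?_, ⟨?_⟩⟩
  · exact (RingHom.ker_comp_of_injective _ hf.injective).trans (ker_minorHom R)
  · exact (Ideal.quotientEquivAlgOfEq R (ker_minorHom R).symm).trans
      (Ideal.quotientKerAlgEquivOfSurjective (minorHom_surjective R))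

end Minors

section Coordinates

variable {R : Type*} [CommRing R]

/-- The matrix `1 + N + a N² + b N³`, where `1 + N` is the generic unipotent matrix.  It is `exp N`
when `a = 1/2` and `b = 1/6`, because `N⁴ = 0`. -/
noncomputable def genericCubic (a b : R) : Matrix (Fin 4) (Fin 4) (MvPolynomial (Fin 6) R) :=
  let N := genericUnipotent R - 1
  1 + N + a • N ^ 2 + b • N ^ 3

/-- The substitution replacing each indeterminate entry of the generic unipotent matrix by the
corresponding entry of `1 + N + a N² + b N³`. -/
noncomputable def cubicHom (a b : R) : MvPolynomial (Fin 6) R →ₐ[R] MvPolynomial (Fin 6) R :=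
  let M := genericCubic a b
  aeval ![M 1 0, M 2 1, M 3 2, M 2 0, M 3 1, M 3 0]

theorem cubicHom_eq_aeval (a b : R) :
    cubicHom a b =
      aeval ![X 0, X 1, X 2,
        X 3 + C a * (X 0 * X 1),
        X 4 + C a * (X 1 * X 2),
        X 5 + C a * (X 0 * X 4 + X 2 * X 3) + C b * (X 0 * X 1 * X 2)] := by
  have hN : genericUnipotent R - 1 =
      !![0, 0, 0, 0; X 0, 0, 0, 0; X 3, X 1, 0, 0; X 5, X 4, X 2, 0] := by
    ext1 i j
    fin_cases i <;> fin_cases j <;> simp [genericUnipotent]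
  ext1 i
  fin_cases i <;>
    simp [cubicHom, genericCubic, hN, pow_succ, smul_eq_C_mul] <;>
    ring

-- The power series inverse to `t + a t² + b t³` begins `t - a t² + (2 a² - b) t³`.
theorem cubicHom_cubicHom_inverse (a b : R) (p : MvPolynomial (Fin 6) R) :
    cubicHom a b (cubicHom (-a) (2 * a ^ 2 - b) p) = p := by
  suffices h : (cubicHom a b).comp (cubicHom (-a) (2 * a ^ 2 - b)) = AlgHom.id R _ from
    DFunLike.congr_fun h p
  ext1 i
  fin_cases i <;> simp [cubicHom_eq_aeval, algHom_C, algebraMap_eq, map_ofNat]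
  ring

theorem cubicHom_bijective (a b : R) : Function.Bijective (cubicHom a b) := by
  have hleft : Function.LeftInverse (cubicHom (-a) (2 * a ^ 2 - b)) (cubicHom a b) := fun p => by
    have h := cubicHom_cubicHom_inverse (-a) (2 * a ^ 2 - b) p
    rwa [neg_neg, neg_sq, sub_sub_cancel] at h
  have hright : Function.RightInverse (cubicHom (-a) (2 * a ^ 2 - b)) (cubicHom a b) :=
    cubicHom_cubicHom_inverse a b
  exact ⟨hleft.injective, hright.surjective⟩

end Coordinates

theorem phiSl4_eq_cubicHom_comp_minorHom :
    phiSl4 = (cubicHom 2⁻¹ 6⁻¹).comp (minorHom ℂ) := by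
  refine algHom_ext fun i => MvPolynomial.funext fun x => ?_
  fin_cases i <;> simp [phiSl4, cubicHom_eq_aeval, minorHom, unipotentMinor_eq] <;> ring

/-- `φ` is surjective with kernel the ideal of the ten relations;
consequently the quotient is isomorphic as a `ℂ`-algebra to the polynomial
ring `ℂ[x,y,z,u,v,w]` in six variables. -/
theorem sl4_reduced_shape_algebra_presentation :
    Function.Surjective phiSl4 ∧
    RingHom.ker phiSl4.toRingHom = sl4RelationsIdeal ∧
    Nonempty ((MvPolynomial (Fin 11) ℂ ⧸ sl4RelationsIdeal) ≃ₐ[ℂ]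
      MvPolynomial (Fin 6) ℂ) := by
  rw [phiSl4_eq_cubicHom_comp_minorHom]
  exact sl4_reduced_shape_algebra_presentation_general ℂ (cubicHom_bijective 2⁻¹ 6⁻¹)
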